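/- Let n ≥ 2. Define B̂ = { x ∈ ℝⁿ : xᵢ ≥ 0 for all i, and ‖x‖₁ < 1 } and B̆ = { x ∈ ℝⁿ : xᵢ ≥ 0 for all i, and ‖x‖₂ < 1 }, and define Ψ : B̂ → ℝⁿ by Ψ(x) = x if ‖x‖₁ ≤ 1/2, and Ψ(x) = ( ‖x‖₁⁻¹ − ‖x‖₂⁻¹ + 2‖x‖₁/‖x‖₂ − 1 ) · x if 1/2 < ‖x‖₁ < 1. Then Ψ is well-defined and continuous on B̂, is a bijection from B̂ onto B̆, and both Ψ and its inverse are Lipschitz continuous; in particular, Ψ is a bi-Lipschitz homeomorphism from the positive quadrant of the ℓ¹ unit ball onto the positive quadrant of the Euclidean unit ball, and Ψ is the identity on { x ∈ B̂ : ‖x‖₁ ≤ 1/2 }. -/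

import Mathlib

/-!
On the ray where `‖·‖₁ = k ‖·‖₂`, the map `Ψ` fixes the points with `‖·‖₁ ≤ 1/2` and acts on
`‖·‖₁` beyond them as the affine function of slope `2 k - 1` that fixes `1/2` and sends `1` to `k`,
the value of `‖·‖₁` where `‖·‖₂ = 1`. As `k ≥ 1`, this is invertible on each ray, with an explicit
inverse.

For the Lipschitz bounds, note that the factor defining `Ψ` equals `1` at `‖x‖₁ = 1/2` whatever
`‖x‖₂` is. Hence, if `‖x‖₁ ≤ C ‖x‖₂`, replacing `‖x‖₁` by `max ‖x‖₁ (1/2)` and `‖x‖₂` by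
`max ‖x‖₂ (1/(2C))` in that factor removes both the case distinction and the singularities, and
leaves quotients of Lipschitz functions whose denominators are bounded below. The same works for
`Ψ⁻¹`, with the first replacement only.
-/

open scoped Classical

/-- The transformation from the positive quadrant of the `ℓ¹` unit ball onto the
positive quadrant of the Euclidean unit ball: the identity for `‖x‖₁ ≤ 1/2`, and
`( ‖x‖₁⁻¹ − ‖x‖₂⁻¹ + 2‖x‖₁/‖x‖₂ − 1 ) • x` for `1/2 < ‖x‖₁`. -/
noncomputable def quadrantMap (n : ℕ) (x : EuclideanSpace ℝ (Fin n)) :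
    EuclideanSpace ℝ (Fin n) :=
  if (∑ i, |x i|) ≤ 1 / 2 then x
  else ((∑ i, |x i|)⁻¹ - ‖x‖⁻¹ + 2 * (∑ i, |x i|) / ‖x‖ - 1) • x

/-- The positive quadrant of the `ℓ¹` unit ball. -/
def quadrantL1 (n : ℕ) : Set (EuclideanSpace ℝ (Fin n)) :=
  {x | (∀ i, 0 ≤ x i) ∧ ∑ i, |x i| < 1}

/-- The positive quadrant of the Euclidean unit ball. -/
def quadrantL2 (n : ℕ) : Set (EuclideanSpace ℝ (Fin n)) :=
  {x | (∀ i, 0 ≤ x i) ∧ ‖x‖ < 1}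

section LipschitzCalculus

variable {α β 𝕜 : Type*} [PseudoMetricSpace α] {A : Set α} {Kf Kg : NNReal}

theorem isBounded_image_of_lipschitzOnWith [PseudoMetricSpace β] {f : α → β}
    (hA : Bornology.IsBounded A) (hf : LipschitzOnWith Kf f A) : Bornology.IsBounded (f '' A) :=
  Metric.isBounded_image_iff.2 ⟨Kf * Metric.diam A, fun x hx y hy =>
    (hf.dist_le_mul x hx y hy).trans (by gcongr; exact Metric.dist_le_diam_of_mem hA hx hy)⟩

theorem exists_lipschitzOnWith_smul [PseudoMetricSpace 𝕜] [PseudoMetricSpace β] [Zero 𝕜] [Zero β]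
    [SMul 𝕜 β] [IsBoundedSMul 𝕜 β] {f : α → 𝕜} {g : α → β} (hA : Bornology.IsBounded A)
    (hf : LipschitzOnWith Kf f A) (hg : LipschitzOnWith Kg g A) :
    ∃ K, LipschitzOnWith K (fun x => f x • g x) A := by
  obtain ⟨M, hM⟩ := (isBounded_image_of_lipschitzOnWith hA hf).subset_closedBall 0
  obtain ⟨N, hN⟩ := (isBounded_image_of_lipschitzOnWith hA hg).subset_closedBall 0
  have hfM : ∀ x ∈ A, dist (f x) 0 ≤ M := fun x hx => hM (Set.mem_image_of_mem f hx)
  have hgN : ∀ x ∈ A, dist (g x) 0 ≤ N := fun x hx => hN (Set.mem_image_of_mem g hx)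
  refine ⟨_, LipschitzOnWith.of_dist_le' (K := M * Kg + Kf * N) fun x hx y hy => ?_⟩
  have hM0 : 0 ≤ M := dist_nonneg.trans (hfM x hx)
  calc dist (f x • g x) (f y • g y)
      ≤ dist (f x • g x) (f x • g y) + dist (f x • g y) (f y • g y) := dist_triangle _ _ _
    _ ≤ dist (f x) 0 * dist (g x) (g y) + dist (f x) (f y) * dist (g y) 0 :=
        add_le_add (dist_smul_pair _ _ _) (dist_pair_smul _ _ _)
    _ ≤ M * (Kg * dist x y) + Kf * dist x y * N := by
        gcongr
        exacts [hfM x hx, hg.dist_le_mul x hx y hy, hf.dist_le_mul x hx y hy, hgN y hy]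
    _ = (M * Kg + Kf * N) * dist x y := by ring

theorem exists_lipschitzOnWith_inv [NormedDivisionRing 𝕜] {f : α → 𝕜} {c : ℝ} (hc : 0 < c)
    (hf : LipschitzOnWith Kf f A) (hcf : ∀ x ∈ A, c ≤ ‖f x‖) :
    ∃ K, LipschitzOnWith K (fun x => (f x)⁻¹) A := by
  have hf0 : ∀ x ∈ A, f x ≠ 0 := fun x hx => norm_pos_iff.1 (hc.trans_le (hcf x hx))
  refine ⟨_, LipschitzOnWith.of_dist_le' (K := Kf / (c * c)) fun x hx y hy => ?_⟩
  calc dist (f x)⁻¹ (f y)⁻¹ = dist (f x) (f y) / (‖f x‖ * ‖f y‖) :=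
        dist_inv_inv₀ (hf0 x hx) (hf0 y hy)
    _ ≤ Kf * dist x y / (c * c) := by
        gcongr
        exacts [hf.dist_le_mul x hx y hy, hcf x hx, hcf y hy]
    _ = Kf / (c * c) * dist x y := by ring

end LipschitzCalculus

section ScalarFactors

variable {s r t : ℝ}

/-- The factor by which `Ψ` stretches a vector with `‖x‖₁ = s ≥ 1/2` and `‖x‖₂ = r`. -/
noncomputable def outwardFactor (s r : ℝ) : ℝ :=
  s⁻¹ - r⁻¹ + 2 * s / r - 1

/-- The factor by which `Ψ⁻¹` shrinks a vector with `‖y‖₁ = t ≥ 1/2` and `‖y‖₂ = r`. On the ray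
where `‖·‖₁ = k ‖·‖₂`, `Ψ` acts on `‖·‖₁` as `s ↦ (2 k - 1) s + 1 - k`; solving for `s` gives the
formula. -/
noncomputable def inwardFactor (t r : ℝ) : ℝ :=
  t⁻¹ - (1 - r) / (2 * t - r)

theorem outwardFactor_half (r : ℝ) : outwardFactor (1 / 2) r = 1 := by
  rw [outwardFactor]
  ring

theorem inwardFactor_half (hr : r ≠ 1) : inwardFactor (1 / 2) r = 1 := by
  have : 1 - r ≠ 0 := sub_ne_zero.2 hr.symm
  rw [inwardFactor]
  field_simp
  ring

theorem one_le_outwardFactor (hs : 1 / 2 ≤ s) (hr : 0 < r) (hrs : r ≤ s) :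
    1 ≤ outwardFactor s r := by
  have hdiff : outwardFactor s r - 1 = (2 * s - 1) * (r⁻¹ - s⁻¹) := by
    have hs0 : s ≠ 0 := by linarith
    rw [outwardFactor]
    field_simp
    ring
  have : 0 ≤ (2 * s - 1) * (r⁻¹ - s⁻¹) :=
    mul_nonneg (by linarith) (sub_nonneg.2 (inv_anti₀ hr hrs))
  linarith

theorem outwardFactor_mul_lt_one (hs : s < 1) (hr : 0 < r) (hrs : r ≤ s) :
    outwardFactor s r * r < 1 := by
  have hs0 : 0 < s := hr.trans_le hrs
  have hdiff : 1 - outwardFactor s r * r = (1 - s) * (2 * s - r) / s := by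
    rw [outwardFactor]
    field_simp
    ring
  have : 0 < (1 - s) * (2 * s - r) / s :=
    div_pos (mul_pos (by linarith) (by linarith)) hs0
  linarith

theorem half_lt_inwardFactor_mul (ht : 1 / 2 < t) (hr : 0 < r) (hrt : r ≤ t) :
    1 / 2 < inwardFactor t r * t := by
  have hdiff : inwardFactor t r * t - 1 / 2 = r * (t - 1 / 2) / (2 * t - r) := by
    have ht0 : t ≠ 0 := by linarith
    -- `field_simp` moves numerals to the right, and only then looks for this hypothesis.
    have hd : t * 2 - r ≠ 0 := by linarith
    rw [inwardFactor]
    field_simp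
    ring
  have : 0 < r * (t - 1 / 2) / (2 * t - r) :=
    div_pos (mul_pos hr (by linarith)) (by linarith)
  linarith

theorem inwardFactor_pos (ht : 1 / 2 < t) (hr : 0 < r) (hrt : r ≤ t) : 0 < inwardFactor t r := by
  have ht0 : 0 < t := by linarith
  exact pos_of_mul_pos_left (by linarith [half_lt_inwardFactor_mul ht hr hrt]) ht0.le

theorem inwardFactor_mul_lt_one (ht : 0 < t) (hr : r < 1) (hrt : r ≤ t) :
    inwardFactor t r * t < 1 := by
  have hmul : inwardFactor t r * t = 1 - (1 - r) / (2 * t - r) * t := by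
    rw [inwardFactor, sub_mul, inv_mul_cancel₀ ht.ne']
  have : 0 < (1 - r) / (2 * t - r) * t :=
    mul_pos (div_pos (by linarith) (by linarith)) ht
  linarith

theorem inwardFactor_mul_outwardFactor (hs : 1 / 2 ≤ s) (hr : 0 < r) (hrs : r ≤ s) :
    inwardFactor (outwardFactor s r * s) (outwardFactor s r * r) * outwardFactor s r = 1 := by
  have hs0 : s ≠ 0 := by linarith
  have hd : s * 2 - r ≠ 0 := by linarith
  have hfactor : ∀ a ≠ 0, inwardFactor (a * s) (a * r) * a = s⁻¹ - (1 - a * r) / (2 * s - r) := by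
    intro a ha
    rw [inwardFactor, show 2 * (a * s) - a * r = a * (2 * s - r) by ring]
    field_simp
  have hshrink : (1 - outwardFactor s r * r) / (2 * s - r) = (1 - s) / s := by
    rw [outwardFactor]
    field_simp
    ring
  rw [hfactor _ (by linarith [one_le_outwardFactor hs hr hrs]), hshrink]
  field_simp
  ring

theorem outwardFactor_mul_inwardFactor (ht : 1 / 2 < t) (hr : 0 < r) (hrt : r ≤ t) :
    outwardFactor (inwardFactor t r * t) (inwardFactor t r * r) * inwardFactor t r = 1 := by
  have ht0 : t ≠ 0 := by linarith
  have hd : t * 2 - r ≠ 0 := by linarith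
  have hfactor : ∀ b ≠ 0, outwardFactor (b * t) (b * r) * b = t⁻¹ - r⁻¹ + b * (2 * t / r - 1) := by
    intro b hb
    rw [outwardFactor]
    field_simp
    ring
  have hstretch : inwardFactor t r * (2 * t / r - 1) = 1 + r⁻¹ - t⁻¹ := by
    rw [inwardFactor]
    field_simp
    ring
  rw [hfactor _ (inwardFactor_pos ht hr hrt).ne', hstretch]
  ring

section Lipschitz

variable {α : Type*} [PseudoMetricSpace α] {A : Set α} {σ ρ : α → ℝ} {Kσ Kρ : NNReal} {a b : ℝ}

theorem exists_lipschitzOnWith_outwardFactor (hA : Bornology.IsBounded A)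
    (hσ : LipschitzOnWith Kσ σ A) (hρ : LipschitzOnWith Kρ ρ A) (ha : 0 < a)
    (haσ : ∀ x ∈ A, a ≤ σ x) (hb : 0 < b) (hbρ : ∀ x ∈ A, b ≤ ρ x) :
    ∃ K, LipschitzOnWith K (fun x => outwardFactor (σ x) (ρ x)) A := by
  obtain ⟨_, hσinv⟩ := exists_lipschitzOnWith_inv ha hσ fun x hx =>
    (haσ x hx).trans (Real.le_norm_self _)
  obtain ⟨_, hρinv⟩ := exists_lipschitzOnWith_inv hb hρ fun x hx =>
    (hbρ x hx).trans (Real.le_norm_self _)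
  obtain ⟨_, hquot⟩ := exists_lipschitzOnWith_smul hA (hσ.add hσ) hρinv
  simp only [outwardFactor, div_eq_mul_inv, two_mul]
  exact ⟨_, ((hσinv.sub hρinv).add hquot).sub (LipschitzWith.const 1).lipschitzOnWith⟩

theorem exists_lipschitzOnWith_inwardFactor (hA : Bornology.IsBounded A)
    (hσ : LipschitzOnWith Kσ σ A) (hρ : LipschitzOnWith Kρ ρ A) (ha : 0 < a)
    (haσ : ∀ x ∈ A, a ≤ σ x) (hρσ : ∀ x ∈ A, ρ x ≤ σ x) :
    ∃ K, LipschitzOnWith K (fun x => inwardFactor (σ x) (ρ x)) A := by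
  obtain ⟨_, hσinv⟩ := exists_lipschitzOnWith_inv ha hσ fun x hx =>
    (haσ x hx).trans (Real.le_norm_self _)
  have hadenom : ∀ x ∈ A, a ≤ σ x + σ x - ρ x := fun x hx => by linarith [haσ x hx, hρσ x hx]
  obtain ⟨_, hdenominv⟩ := exists_lipschitzOnWith_inv ha ((hσ.add hσ).sub hρ) fun x hx =>
    (hadenom x hx).trans (Real.le_norm_self _)
  obtain ⟨_, hquot⟩ := exists_lipschitzOnWith_smul hA
    ((LipschitzWith.const 1).lipschitzOnWith.sub hρ) hdenominv
  simp only [inwardFactor, div_eq_mul_inv, two_mul]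
  exact ⟨_, hσinv.sub hquot⟩

end Lipschitz

end ScalarFactors

section BallTransformation

variable {E : Type*} [NormedAddCommGroup E] [NormedSpace ℝ E] {p : Seminorm ℝ E} {x y : E}
  {A : Set E}

/-- The transformation `Ψ` for an arbitrary seminorm `p` in place of `‖·‖₁` and the norm of an
arbitrary normed space in place of `‖·‖₂`. -/
noncomputable def ballTransformation (p : Seminorm ℝ E) (x : E) : E :=
  if p x ≤ 1 / 2 then x else outwardFactor (p x) ‖x‖ • x

/-- The inverse of `ballTransformation p`, when `p` dominates the norm. -/
noncomputable def ballTransformationInv (p : Seminorm ℝ E) (y : E) : E :=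
  if p y ≤ 1 / 2 then y else inwardFactor (p y) ‖y‖ • y

theorem ballTransformation_of_le (h : p x ≤ 1 / 2) : ballTransformation p x = x :=
  if_pos h

theorem ballTransformation_of_gt (h : 1 / 2 < p x) :
    ballTransformation p x = outwardFactor (p x) ‖x‖ • x :=
  if_neg h.not_ge

theorem ballTransformationInv_of_le (h : p y ≤ 1 / 2) : ballTransformationInv p y = y :=
  if_pos h

theorem ballTransformationInv_of_gt (h : 1 / 2 < p y) :
    ballTransformationInv p y = inwardFactor (p y) ‖y‖ • y :=
  if_neg h.not_ge

theorem norm_pos_of_seminorm_pos (h : 0 < p x) : 0 < ‖x‖ :=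
  norm_pos_iff.2 fun hx => h.ne' (by rw [hx, map_zero])

theorem seminorm_smul_of_pos {c : ℝ} (hc : 0 < c) (x : E) : p (c • x) = c * p x := by
  rw [map_smul_eq_mul, Real.norm_of_nonneg hc.le]

section Inverse

variable (hle : ∀ z, ‖z‖ ≤ p z)
include hle

theorem ballTransformationInv_ballTransformation (x : E) :
    ballTransformationInv p (ballTransformation p x) = x := by
  rcases le_or_gt (p x) (1 / 2) with h | h
  · rw [ballTransformation_of_le h, ballTransformationInv_of_le h]
  have hr : 0 < ‖x‖ := norm_pos_of_seminorm_pos (p := p) (by linarith)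
  have ha := one_le_outwardFactor h.le hr (hle x)
  have hpa : p (outwardFactor (p x) ‖x‖ • x) = outwardFactor (p x) ‖x‖ * p x :=
    seminorm_smul_of_pos (by linarith) x
  have hgt : 1 / 2 < p (outwardFactor (p x) ‖x‖ • x) := by
    rw [hpa]
    nlinarith
  rw [ballTransformation_of_gt h, ballTransformationInv_of_gt hgt, hpa,
    norm_smul_of_nonneg (by linarith), smul_smul, inwardFactor_mul_outwardFactor h.le hr (hle x),
    one_smul]

theorem ballTransformation_ballTransformationInv (y : E) :
    ballTransformation p (ballTransformationInv p y) = y := by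
  rcases le_or_gt (p y) (1 / 2) with h | h
  · rw [ballTransformationInv_of_le h, ballTransformation_of_le h]
  have hr : 0 < ‖y‖ := norm_pos_of_seminorm_pos (p := p) (by linarith)
  have hb := inwardFactor_pos h hr (hle y)
  have hpb : p (inwardFactor (p y) ‖y‖ • y) = inwardFactor (p y) ‖y‖ * p y :=
    seminorm_smul_of_pos hb y
  have hgt : 1 / 2 < p (inwardFactor (p y) ‖y‖ • y) := by
    rw [hpb]
    exact half_lt_inwardFactor_mul h hr (hle y)
  rw [ballTransformationInv_of_gt h, ballTransformation_of_gt hgt, hpb,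
    norm_smul_of_nonneg hb.le, smul_smul, outwardFactor_mul_inwardFactor h hr (hle y), one_smul]

theorem mapsTo_ballTransformation {S : Set E} (hS : ∀ c : ℝ, 0 < c → ∀ x ∈ S, c • x ∈ S) :
    Set.MapsTo (ballTransformation p) (S ∩ {x | p x < 1}) (S ∩ {y | ‖y‖ < 1}) := by
  rintro x ⟨hxS, hx1 : p x < 1⟩
  rcases le_or_gt (p x) (1 / 2) with h | h
  · rw [ballTransformation_of_le h]
    exact ⟨hxS, (hle x).trans_lt hx1⟩
  have hr : 0 < ‖x‖ := norm_pos_of_seminorm_pos (p := p) (by linarith)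
  have ha : 0 < outwardFactor (p x) ‖x‖ := by linarith [one_le_outwardFactor h.le hr (hle x)]
  rw [ballTransformation_of_gt h]
  exact ⟨hS _ ha x hxS,
    (norm_smul_of_nonneg ha.le x).trans_lt (outwardFactor_mul_lt_one hx1 hr (hle x))⟩

theorem mapsTo_ballTransformationInv {S : Set E} (hS : ∀ c : ℝ, 0 < c → ∀ x ∈ S, c • x ∈ S) :
    Set.MapsTo (ballTransformationInv p) (S ∩ {y | ‖y‖ < 1}) (S ∩ {x | p x < 1}) := by
  rintro y ⟨hyS, hy1 : ‖y‖ < 1⟩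
  rcases le_or_gt (p y) (1 / 2) with h | h
  · rw [ballTransformationInv_of_le h]
    exact ⟨hyS, h.trans_lt one_half_lt_one⟩
  have hb := inwardFactor_pos h (norm_pos_of_seminorm_pos (by linarith)) (hle y)
  rw [ballTransformationInv_of_gt h]
  exact ⟨hS _ hb y hyS,
    (seminorm_smul_of_pos hb y).trans_lt (inwardFactor_mul_lt_one (by linarith) hy1 (hle y))⟩

end Inverse

theorem lipschitzWith_of_seminorm_le {C : ℝ} (hC : ∀ x, p x ≤ C * ‖x‖) :
    LipschitzWith C.toNNReal p :=
  LipschitzWith.of_dist_le' fun x y => by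
    rw [Real.dist_eq, dist_eq_norm]
    exact (abs_sub_map_le_sub p x y).trans (hC _)

theorem ballTransformation_eq_smul {C : ℝ} (hC : 0 < C) (hpC : ∀ x, p x ≤ C * ‖x‖) (x : E) :
    ballTransformation p x = outwardFactor (max (p x) (1 / 2)) (max ‖x‖ (1 / (2 * C))) • x := by
  rcases le_or_gt (p x) (1 / 2) with h | h
  · rw [ballTransformation_of_le h, max_eq_right h, outwardFactor_half, one_smul]
  · have hx : 1 / (2 * C) ≤ ‖x‖ := by
      rw [div_le_iff₀ (by positivity)]
      linarith [hpC x]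
    rw [ballTransformation_of_gt h, max_eq_left h.le, max_eq_left hx]

theorem ballTransformationInv_eq_smul (hle : ∀ z, ‖z‖ ≤ p z) (y : E) :
    ballTransformationInv p y = inwardFactor (max (p y) (1 / 2)) ‖y‖ • y := by
  rcases le_or_gt (p y) (1 / 2) with h | h
  · have hy : ‖y‖ ≠ 1 := by linarith [hle y]
    rw [ballTransformationInv_of_le h, max_eq_right h, inwardFactor_half hy, one_smul]
  · rw [ballTransformationInv_of_gt h, max_eq_left h.le]

theorem exists_lipschitzOnWith_ballTransformation (hp : Continuous p)
    (hA : Bornology.IsBounded A) : ∃ K, LipschitzOnWith K (ballTransformation p) A := by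
  obtain ⟨C, hC, hpC⟩ := p.bound_of_continuous_normedSpace hp
  obtain ⟨_, hfactor⟩ := exists_lipschitzOnWith_outwardFactor hA
    ((lipschitzWith_of_seminorm_le hpC).max_const (1 / 2)).lipschitzOnWith
    (lipschitzWith_one_norm.max_const (1 / (2 * C))).lipschitzOnWith
    one_half_pos (fun _ _ => le_max_right _ _) (by positivity) (fun _ _ => le_max_right _ _)
  rw [show ballTransformation p = _ from funext (ballTransformation_eq_smul hC hpC)]
  exact exists_lipschitzOnWith_smul hA hfactor LipschitzWith.id.lipschitzOnWith

theorem exists_lipschitzOnWith_ballTransformationInv (hp : Continuous p) (hle : ∀ z, ‖z‖ ≤ p z)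
    (hA : Bornology.IsBounded A) : ∃ K, LipschitzOnWith K (ballTransformationInv p) A := by
  obtain ⟨C, -, hpC⟩ := p.bound_of_continuous_normedSpace hp
  obtain ⟨_, hfactor⟩ := exists_lipschitzOnWith_inwardFactor hA
    ((lipschitzWith_of_seminorm_le hpC).max_const (1 / 2)).lipschitzOnWith
    lipschitzWith_one_norm.lipschitzOnWith
    one_half_pos (fun _ _ => le_max_right _ _) (fun y _ => (hle y).trans (le_max_left _ _))
  rw [show ballTransformationInv p = _ from funext (ballTransformationInv_eq_smul hle)]
  exact exists_lipschitzOnWith_smul hA hfactor LipschitzWith.id.lipschitzOnWith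

end BallTransformation

section L1Norm

variable {ι : Type*} [Fintype ι]

/-- The `ℓ¹` norm as a seminorm on Euclidean space. -/
noncomputable def l1Seminorm (ι : Type*) [Fintype ι] : Seminorm ℝ (EuclideanSpace ℝ ι) :=
  Seminorm.of (fun x => ∑ i, |x i|)
    (fun x y => by
      rw [← Finset.sum_add_distrib]
      exact Finset.sum_le_sum fun i _ => abs_add_le (x i) (y i))
    (fun a x => by
      simp only [PiLp.smul_apply, smul_eq_mul, abs_mul, Finset.mul_sum, Real.norm_eq_abs])

theorem continuous_l1Seminorm : Continuous (l1Seminorm ι) := by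
  change Continuous fun x : EuclideanSpace ℝ ι => ∑ i, |x i|
  fun_prop

theorem norm_le_l1Seminorm (x : EuclideanSpace ℝ ι) : ‖x‖ ≤ l1Seminorm ι x := by
  refine le_of_sq_le_sq ?_ (apply_nonneg _ _)
  calc ‖x‖ ^ 2 = ∑ i, |x i| ^ 2 := EuclideanSpace.norm_sq_eq x
    _ ≤ (∑ i, |x i|) ^ 2 := Finset.sum_sq_le_sq_sum_of_nonneg fun i _ => abs_nonneg (x i)

end L1Norm

theorem quadrant_transformation_biLipschitz_general {E : Type*} [NormedAddCommGroup E]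
    [NormedSpace ℝ E] (p : Seminorm ℝ E) (hp : Continuous p) (hle : ∀ x, ‖x‖ ≤ p x) (S : Set E)
    (hS : ∀ c : ℝ, 0 < c → ∀ x ∈ S, c • x ∈ S) :
    ContinuousOn (ballTransformation p) (S ∩ {x | p x < 1}) ∧
      Set.BijOn (ballTransformation p) (S ∩ {x | p x < 1}) (S ∩ {y | ‖y‖ < 1}) ∧
      (∃ K : NNReal, LipschitzOnWith K (ballTransformation p) (S ∩ {x | p x < 1})) ∧
      (∃ g : E → E,
        Set.InvOn g (ballTransformation p) (S ∩ {x | p x < 1}) (S ∩ {y | ‖y‖ < 1}) ∧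
        ∃ K' : NNReal, LipschitzOnWith K' g (S ∩ {y | ‖y‖ < 1})) ∧
      ∀ x ∈ S ∩ {x | p x < 1}, p x ≤ 1 / 2 → ballTransformation p x = x := by
  have hbdd : ∀ {A : Set E}, (∀ x ∈ A, ‖x‖ ≤ 1) → Bornology.IsBounded A := fun h =>
    isBounded_iff_forall_norm_le.2 ⟨1, h⟩
  have hinv : Set.InvOn (ballTransformationInv p) (ballTransformation p)
      (S ∩ {x | p x < 1}) (S ∩ {y | ‖y‖ < 1}) :=
    ⟨fun x _ => ballTransformationInv_ballTransformation hle x,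
      fun y _ => ballTransformation_ballTransformationInv hle y⟩
  obtain ⟨K, hK⟩ := exists_lipschitzOnWith_ballTransformation hp
    (hbdd fun x (hx : x ∈ S ∩ {x | p x < 1}) => (hle x).trans hx.2.le)
  have hLipInv := exists_lipschitzOnWith_ballTransformationInv hp hle
    (hbdd fun y (hy : y ∈ S ∩ {y | ‖y‖ < 1}) => hy.2.le)
  exact ⟨hK.continuousOn,
    hinv.bijOn (mapsTo_ballTransformation hle hS) (mapsTo_ballTransformationInv hle hS),
    ⟨K, hK⟩, ⟨_, hinv, hLipInv⟩, fun _ _ => ballTransformation_of_le⟩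

/-- **The ball-quadrant transformation is bi-Lipschitz and is the identity near
the origin.**  For `n ≥ 2`, the map `Ψ` defined by `Ψ(x) = x` for `‖x‖₁ ≤ 1/2`
and `Ψ(x) = (‖x‖₁⁻¹ − ‖x‖₂⁻¹ + 2‖x‖₁/‖x‖₂ − 1) • x` for `1/2 < ‖x‖₁ < 1` is
continuous on the positive quadrant `B̂` of the `ℓ¹` unit ball, a bijection of
`B̂` onto the positive quadrant `B̆` of the Euclidean unit ball, Lipschitz on `B̂`
with a Lipschitz inverse on `B̆`, and equals the identity on `{‖x‖₁ ≤ 1/2}`. -/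
theorem quadrant_transformation_biLipschitz (n : ℕ) (hn : 2 ≤ n) :
    ContinuousOn (quadrantMap n) (quadrantL1 n) ∧
      Set.BijOn (quadrantMap n) (quadrantL1 n) (quadrantL2 n) ∧
      (∃ K : NNReal, LipschitzOnWith K (quadrantMap n) (quadrantL1 n)) ∧
      (∃ g : EuclideanSpace ℝ (Fin n) → EuclideanSpace ℝ (Fin n),
        Set.InvOn g (quadrantMap n) (quadrantL1 n) (quadrantL2 n) ∧
        ∃ K' : NNReal, LipschitzOnWith K' g (quadrantL2 n)) ∧
      ∀ x ∈ quadrantL1 n, (∑ i, |x i|) ≤ 1 / 2 → quadrantMap n x = x :=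
  quadrant_transformation_biLipschitz_general (l1Seminorm (Fin n)) continuous_l1Seminorm
    norm_le_l1Seminorm {x | ∀ i, 0 ≤ x i} fun _ hc _ hx i => mul_nonneg hc.le (hx i)
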